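/- arXiv:2003.07810 — 6 statements merged into one kernel-verified Lean document; each statement's English description precedes it below -/
import Mathlib

section
/- There exists a universal constant K > 0 such that the following holds. Let G = (V, E) be a simple graph with n vertices, m edges, and maximum degree d, and let ε ∈ (0, 1) with m ≥ 2·⌈n/ε²⌉. Then there exists a subset F ⊆ E with |F| = ⌈n/ε²⌉ such that, writing m̃ := |F|, the subgraph G̃ = (V, F) satisfies 2·(m/m̃)·D_{G̃} − 2·D_G − K·ε·d·I_n ⪯ (m/m̃)·L_{G̃} − L_G ⪯ K·ε·d·I_n, where D_G and D_{G̃} are the diagonal degree matrices of G and G̃, L_G is the Laplacian of G, and L_{G̃} := Σ_{e ∈ F} b_e b_eᵀ. -/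
/-!
Write `s_e = χ_u + χ_v` for an edge `e = uv`. Since `b_e b_eᵀ + s_e s_eᵀ` is twice the degree matrix
of `e`, the lower bound of the theorem for the Laplacian is an upper bound for the signless
Laplacian `2 D - L = ∑ s_e s_eᵀ`. So two one-sided upper bounds have to hold at once for the same
edge set `F`, one for each of the families `b` and `s`, and a barrier argument in the style of
Batson, Spielman and Srivastava gives both.

Edges are moved into `F` one at a time. Let `S` be the set of edges not yet moved, `R` the average
of the rank-one matrices `v_e v_eᵀ` over `S`, and `M` their sum over all edges. The invariant is that
`P₀ = u I - M / m + R` is positive definite, and that the potential `∑ tr P₀⁻¹` over the two families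
does not exceed its initial value. Removing `e` from `S` changes `R` by `(R - v_e v_eᵀ) / (|S| - 1)`,
whose mean over `e ∈ S` is zero. Hence, by the Sherman–Morrison formula
(`posDef_sub_rankOne_and_trace_inv`), convexity of `P ↦ tr P⁻¹` (`trace_inv_sub_le`) and averaging
over `S`, a second-order increase `δ` of the barrier `u` suffices for some `e ∈ S` to preserve the
invariant (`exists_barrier_step`). With `k = ⌈n / ε²⌉` edges to move, initial barrier
`32 ε d k / m²` and increments `8 ε d / m²`, the final barrier is `40 ε d k / m²`, and rescaling the
final invariant by `|S| m / k ≤ m² / k` gives the bound with `K = 40`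
(`exists_subset_upper_bound`).
-/

open Matrix BigOperators

/-! ### Traces of inverses of positive definite matrices -/

/-- Sherman–Morrison for a rank-one downdate that keeps the matrix positive definite. -/
theorem posDef_sub_rankOne_and_trace_inv {V : Type*} [Fintype V] [DecidableEq V]
    {P : Matrix V V ℝ} (hP : P.PosDef) (v : V → ℝ) {c : ℝ} (hc : 0 ≤ c)
    (hx : c * (v ⬝ᵥ P⁻¹ *ᵥ v) < 1) :
    (P - c • vecMulVec v v).PosDef ∧
      (P - c • vecMulVec v v)⁻¹.trace =
        P⁻¹.trace + c * ((P⁻¹ *ᵥ v) ⬝ᵥ (P⁻¹ *ᵥ v)) / (1 - c * (v ⬝ᵥ P⁻¹ *ᵥ v)) := by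
  have hdet : IsUnit P.det := (Matrix.isUnit_iff_isUnit_det _).1 hP.isUnit
  have hsymm : Pᵀ = P := by simpa using hP.isHermitian.eq
  have hPy : P *ᵥ (P⁻¹ *ᵥ v) = v := by
    rw [mulVec_mulVec, mul_nonsing_inv _ hdet, one_mulVec]
  have hinvsymm : (P⁻¹)ᵀ = P⁻¹ := by rw [transpose_nonsing_inv, hsymm]
  set y := P⁻¹ *ᵥ v with hy
  set x := v ⬝ᵥ y with hxdef
  have hvP : v ᵥ* P⁻¹ = y := by rw [← mulVec_transpose, hinvsymm]
  constructor
  · refine .of_dotProduct_mulVec_pos ?_ ?_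
    · refine hP.isHermitian.sub ?_
      have h := (posSemidef_vecMulVec_self_star v).isHermitian
      rw [star_trivial] at h
      rw [IsHermitian, conjTranspose_smul, h.eq, star_trivial]
    · intro w hw
      have hpos := hP.dotProduct_mulVec_pos hw
      -- expanding `⟨w - s y, P (w - s y)⟩ ≥ 0` at `s = c ⟨v, w⟩`
      have hnn := hP.posSemidef.dotProduct_mulVec_nonneg (w - (c * (v ⬝ᵥ w)) • y)
      have hyPw : y ⬝ᵥ P *ᵥ w = v ⬝ᵥ w := by
        rw [dotProduct_mulVec, ← mulVec_transpose, hsymm, hPy]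
      have hyv : y ⬝ᵥ v = x := dotProduct_comm _ _
      have hwv : w ⬝ᵥ v = v ⬝ᵥ w := dotProduct_comm _ _
      simp only [star_trivial, mulVec_sub, mulVec_smul, hPy, sub_dotProduct, dotProduct_sub,
        smul_dotProduct, dotProduct_smul, smul_eq_mul, hyPw, hyv, hwv] at hnn hpos
      simp only [star_trivial, sub_mulVec, smul_mulVec, vecMulVec_mulVec, dotProduct_sub,
        dotProduct_smul, hwv]
      simp only [smul_eq_mul, MulOpposite.smul_eq_mul_unop, MulOpposite.unop_op]
      by_cases hz : c * (v ⬝ᵥ w) ^ 2 = 0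
      · nlinarith
      · have : 0 < c * (v ⬝ᵥ w) ^ 2 := lt_of_le_of_ne (by positivity) (Ne.symm hz)
        nlinarith [mul_pos this (sub_pos.2 hx)]
  · have h1x : 1 - c * x ≠ 0 := (sub_pos.2 hx).ne'
    have hinv : (P - c • vecMulVec v v)⁻¹ = P⁻¹ + (c / (1 - c * x)) • vecMulVec y y := by
      apply inv_eq_right_inv
      rw [sub_mul, mul_add, mul_add, mul_nonsing_inv _ hdet, mul_smul_comm, mul_vecMulVec, hPy,
        smul_mul_assoc, vecMulVec_mul, hvP, smul_mul_smul_comm, vecMulVec_mul_vecMulVec]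
      ext i j
      simp only [Matrix.add_apply, Matrix.sub_apply, Matrix.smul_apply, vecMulVec_apply, smul_eq_mul,
        Pi.smul_apply, ← hxdef]
      field_simp
      ring
    rw [hinv, trace_add, trace_smul, trace_vecMulVec, smul_eq_mul]
    ring

/-- The tangent-line inequality at `P` for the convex function `X ↦ tr X⁻¹`. It is the expansion of
`0 ≤ tr ((P₀⁻¹ - P⁻¹) P₀ (P₀⁻¹ - P⁻¹))`. -/
theorem trace_inv_sub_le {V : Type*} [Fintype V] [DecidableEq V]
    {P₀ P : Matrix V V ℝ} (hP₀ : P₀.PosDef) (hP : P.PosDef) :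
    (P⁻¹ * (P - P₀) * P⁻¹).trace ≤ P₀⁻¹.trace - P⁻¹.trace := by
  have hdet : IsUnit P.det := (Matrix.isUnit_iff_isUnit_det _).1 hP.isUnit
  have hdet₀ : IsUnit P₀.det := (Matrix.isUnit_iff_isUnit_det _).1 hP₀.isUnit
  have h := (hP₀.posSemidef.mul_mul_conjTranspose_same (P₀⁻¹ - P⁻¹)).trace_nonneg
  rw [conjTranspose_sub, hP₀.inv.isHermitian.eq, hP.inv.isHermitian.eq] at h
  have e1 : (P₀⁻¹ - P⁻¹) * P₀ * (P₀⁻¹ - P⁻¹) = P₀⁻¹ - P⁻¹ - (P⁻¹ - P⁻¹ * P₀ * P⁻¹) := by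
    rw [sub_mul, nonsing_inv_mul _ hdet₀, sub_mul, one_mul, mul_sub, mul_assoc P⁻¹ P₀ P₀⁻¹,
      mul_nonsing_inv _ hdet₀, mul_one]
  have e2 : P⁻¹ * (P - P₀) * P⁻¹ = P⁻¹ - P⁻¹ * P₀ * P⁻¹ := by
    rw [mul_sub, nonsing_inv_mul _ hdet, sub_mul, one_mul]
  rw [e1, trace_sub, trace_sub P₀⁻¹, ← e2] at h
  linarith

theorem trace_mul_nonneg_of_posSemidef {V : Type*} [Fintype V] [DecidableEq V]
    {X Z : Matrix V V ℝ} (hX : X.PosSemidef) (hZ : Z.PosSemidef) : 0 ≤ (X * Z).trace := by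
  obtain ⟨B, rfl⟩ : ∃ B, X = Bᴴ * B := by
    open scoped MatrixOrder in
    exact CStarAlgebra.nonneg_iff_eq_star_mul_self.mp hX.nonneg
  rw [mul_assoc, trace_mul_comm]
  exact (hZ.mul_mul_conjTranspose_same B).trace_nonneg

/-! ### The barrier argument -/

/-- One step of the barrier argument. `R j` is the average over `S` of the rank-one matrices of the
`j`-th family; with `c = 1 / (|S| - 1)`, the new matrix is `P₀ j`, with the average over `S` replaced
by the average over `S \ {e}`, plus the increment `δ` of the barrier. For a suitable `e` both matrices
stay positive definite and the total potential does not increase. -/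
theorem exists_barrier_step {ι V : Type*} [Fintype V] [DecidableEq V]
    (v : Bool → ι → V → ℝ) (S : Finset ι) (hS : S.Nonempty) (hv : ∀ j, ∀ e ∈ S, v j e ≠ 0)
    (P₀ R : Bool → Matrix V V ℝ) (hP₀ : ∀ j, (P₀ j).PosDef)
    (hR : ∀ j, (S.card : ℝ) • R j = ∑ e ∈ S, vecMulVec (v j e) (v j e))
    {c ρ δ θ : ℝ} (hc : 0 < c) (hρ : ∀ j, (ρ • (1 : Matrix V V ℝ) - R j).PosSemidef)
    (hρ0 : 0 ≤ ρ) (hδ : 0 < δ) (hθ : c * ρ * ∑ j, (P₀ j)⁻¹.trace ≤ θ) (hθ1 : θ ≤ 1 / 2)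
    (hδθ : 2 * θ * (c * ρ) ≤ δ) :
    ∃ e ∈ S,
      (∀ j, (P₀ j + δ • (1 : Matrix V V ℝ) + c • R j - c • vecMulVec (v j e) (v j e)).PosDef) ∧
      ∑ j, (P₀ j + δ • (1 : Matrix V V ℝ) + c • R j - c • vecMulVec (v j e) (v j e))⁻¹.trace ≤
        ∑ j, (P₀ j)⁻¹.trace := by
  obtain ⟨e₀, he₀⟩ := hS
  have hr : (0 : ℝ) < S.card := by exact_mod_cast Finset.card_pos.2 ⟨e₀, he₀⟩
  have hV : Nonempty V := by
    by_contra h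
    rw [not_nonempty_iff] at h
    exact hv true e₀ he₀ (Subsingleton.elim _ _)
  have hRpsd : ∀ j, (R j).PosSemidef := by
    intro j
    have h : R j = (S.card : ℝ)⁻¹ • ∑ e ∈ S, vecMulVec (v j e) (v j e) := by
      rw [← hR, smul_smul, inv_mul_cancel₀ hr.ne', one_smul]
    rw [h]
    refine PosSemidef.smul (posSemidef_sum _ fun e _ => ?_) (by positivity)
    simpa using posSemidef_vecMulVec_self_star (v j e)
  set P : Bool → Matrix V V ℝ := fun j => P₀ j + δ • (1 : Matrix V V ℝ) + c • R j with hPdef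
  have hdiff : ∀ j, P j - P₀ j = δ • (1 : Matrix V V ℝ) + c • R j := by
    intro j; simp only [hPdef]; abel
  have hdpsd : ∀ j, (δ • (1 : Matrix V V ℝ) + c • R j).PosSemidef := fun j =>
    (PosSemidef.one.smul hδ.le).add ((hRpsd j).smul hc.le)
  have hP : ∀ j, (P j).PosDef := by
    intro j
    have : P j = P₀ j + (δ • (1 : Matrix V V ℝ) + c • R j) := by rw [← hdiff]; abel
    rw [this]
    exact (hP₀ j).add_posSemidef (hdpsd j)
  have hH : ∀ j, ((P j)⁻¹)ᴴ = (P j)⁻¹ := fun j => (hP j).inv.isHermitian.eq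
  -- the drop of the potential caused by moving the barrier
  have hdrop : ∀ j, δ * ((P j)⁻¹ * (P j)⁻¹).trace + c * ((P j)⁻¹ * R j * (P j)⁻¹).trace ≤
      (P₀ j)⁻¹.trace - (P j)⁻¹.trace := by
    intro j
    have h := trace_inv_sub_le (hP₀ j) (hP j)
    rw [hdiff, mul_add, add_mul, trace_add] at h
    simpa using h
  have hT2pos : ∀ j, 0 < ((P j)⁻¹ * (P j)⁻¹).trace := by
    intro j
    have h := ((PosDef.one (n := V) (R := ℝ)).mul_mul_conjTranspose_same (B := (P j)⁻¹)
      (vecMul_injective_of_isUnit (hP j).inv.isUnit)).trace_pos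
    rwa [mul_one, hH] at h
  have hTnn : ∀ j, 0 ≤ ((P j)⁻¹ * R j * (P j)⁻¹).trace := by
    intro j
    have h := ((hRpsd j).mul_mul_conjTranspose_same ((P j)⁻¹)).trace_nonneg
    rwa [hH] at h
  have hTle : ∀ j, ((P j)⁻¹ * R j * (P j)⁻¹).trace ≤ ρ * ((P j)⁻¹ * (P j)⁻¹).trace := by
    intro j
    have h := ((hρ j).mul_mul_conjTranspose_same ((P j)⁻¹)).trace_nonneg
    rw [hH, mul_sub, sub_mul, trace_sub] at h
    simpa using h
  have hθle : ∀ j, ((P j)⁻¹ * R j).trace ≤ ρ * (P₀ j)⁻¹.trace := by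
    intro j
    have h := trace_mul_nonneg_of_posSemidef (hP j).inv.posSemidef (hρ j)
    rw [mul_sub, trace_sub] at h
    have h2 : (P j)⁻¹.trace ≤ (P₀ j)⁻¹.trace := by
      have := hdrop j
      have := mul_nonneg hδ.le (hT2pos j).le
      have := mul_nonneg hc.le (hTnn j)
      linarith
    have h3 := mul_le_mul_of_nonneg_left h2 hρ0
    simp at h
    linarith
  -- Totals over the two families; `D` bounds the drop of the potential from below.
  set T2 := ∑ j, ((P j)⁻¹ * (P j)⁻¹).trace with hT2
  set T := ∑ j, ((P j)⁻¹ * R j * (P j)⁻¹).trace with hT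
  set Θ := ∑ j, ((P j)⁻¹ * R j).trace with hΘ
  have sT2 : 0 < T2 := Finset.sum_pos (fun j _ => hT2pos j) Finset.univ_nonempty
  have sT : 0 ≤ T := Finset.sum_nonneg fun j _ => hTnn j
  have sTle : T ≤ ρ * T2 := by
    rw [hT2, Finset.mul_sum]; exact Finset.sum_le_sum fun j _ => hTle j
  have sΘ : c * Θ ≤ θ := by
    refine le_trans ?_ hθ
    rw [mul_assoc]
    refine mul_le_mul_of_nonneg_left ?_ hc.le
    rw [Finset.mul_sum]; exact Finset.sum_le_sum fun j _ => hθle j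
  have sdrop : δ * T2 + c * T ≤ ∑ j, (P₀ j)⁻¹.trace - ∑ j, (P j)⁻¹.trace := by
    rw [hT2, hT, Finset.mul_sum, Finset.mul_sum, ← Finset.sum_add_distrib,
      ← Finset.sum_sub_distrib]
    exact Finset.sum_le_sum fun j _ => hdrop j
  set D := δ * T2 + c * T with hD
  have hDpos : 0 < D := by
    have := mul_pos hδ sT2
    have := mul_nonneg hc.le sT
    linarith
  set x : ι → ℝ := fun e => ∑ j, c * (v j e ⬝ᵥ (P j)⁻¹ *ᵥ v j e) with hx
  set y : ι → ℝ := fun e => ∑ j, c * (((P j)⁻¹ *ᵥ v j e) ⬝ᵥ ((P j)⁻¹ *ᵥ v j e)) with hy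
  have hsumx : ∑ e ∈ S, x e = S.card * (c * Θ) := by
    rw [hx, Finset.sum_comm, hΘ, Finset.mul_sum, Finset.mul_sum]
    refine Finset.sum_congr rfl fun j _ => ?_
    have h : (S.card : ℝ) * ((P j)⁻¹ * R j).trace = ∑ e ∈ S, v j e ⬝ᵥ (P j)⁻¹ *ᵥ v j e := by
      rw [← smul_eq_mul, ← trace_smul, ← mul_smul_comm, hR, Finset.mul_sum, trace_sum]
      refine Finset.sum_congr rfl fun e _ => ?_
      rw [mul_vecMulVec, trace_vecMulVec, dotProduct_comm]
    rw [← Finset.mul_sum, ← h]; ring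
  have hsumy : ∑ e ∈ S, y e = S.card * (c * T) := by
    rw [hy, Finset.sum_comm, hT, Finset.mul_sum, Finset.mul_sum]
    refine Finset.sum_congr rfl fun j _ => ?_
    have h : (S.card : ℝ) * ((P j)⁻¹ * R j * (P j)⁻¹).trace =
        ∑ e ∈ S, ((P j)⁻¹ *ᵥ v j e) ⬝ᵥ ((P j)⁻¹ *ᵥ v j e) := by
      rw [← smul_eq_mul, ← trace_smul, ← smul_mul_assoc, ← mul_smul_comm, hR, Finset.mul_sum,
        Finset.sum_mul, trace_sum]
      refine Finset.sum_congr rfl fun e _ => ?_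
      have hs : ((P j)⁻¹)ᵀ = (P j)⁻¹ := by simpa using hH j
      rw [mul_vecMulVec, vecMulVec_mul, trace_vecMulVec, ← mulVec_transpose, hs]
    rw [← Finset.mul_sum, ← h]; ring
  -- Averaging over `S`. The bound on `y e` is what the Sherman–Morrison formula needs for the
  -- potential to rise by at most `D`; it also forces `x e < 1`, because `y e > 0`.
  obtain ⟨e, he, hye⟩ : ∃ e ∈ S, y e ≤ D * (1 - x e) := by
    refine Finset.exists_le_of_sum_le ⟨e₀, he₀⟩ ?_
    rw [hsumy, ← Finset.mul_sum, Finset.sum_sub_distrib, hsumx]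
    simp only [Finset.sum_const, nsmul_eq_mul, mul_one]
    have key : c * T ≤ D * (1 - c * Θ) := by
      have h1 : D * (1 - θ) ≤ D * (1 - c * Θ) :=
        mul_le_mul_of_nonneg_left (by linarith) hDpos.le
      have hΘ0 : 0 ≤ θ := by
        refine le_trans ?_ hθ
        exact mul_nonneg (by positivity) (Finset.sum_nonneg fun j _ =>
          (hP₀ j).inv.posSemidef.trace_nonneg)
      have h2 : θ * (c * T) ≤ θ * (c * (ρ * T2)) := by gcongr
      have h3 : 2 * θ * (c * ρ) * T2 ≤ δ * T2 := by gcongr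
      have h4 : δ * T2 * θ ≤ δ * T2 * (1 / 2) := by gcongr
      rw [hD] at h1 ⊢
      nlinarith
    nlinarith [mul_le_mul_of_nonneg_left key hr.le]
  have hypos : 0 < y e := by
    refine Finset.sum_pos (fun j _ => mul_pos hc ?_) Finset.univ_nonempty
    have hne : (P j)⁻¹ *ᵥ v j e ≠ 0 := by
      intro h
      apply hv j e he
      have h2 : P j *ᵥ ((P j)⁻¹ *ᵥ v j e) = v j e := by
        rw [mulVec_mulVec, mul_nonsing_inv _ ((Matrix.isUnit_iff_isUnit_det _).1 (hP j).isUnit),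
          one_mulVec]
      rw [← h2, h, mulVec_zero]
    simpa using dotProduct_star_self_pos_iff.2 hne
  have hx1 : 0 < 1 - x e := by
    by_contra h
    have := mul_nonpos_of_nonneg_of_nonpos hDpos.le (not_lt.1 h)
    linarith
  have hxj : ∀ j, c * (v j e ⬝ᵥ (P j)⁻¹ *ᵥ v j e) ≤ x e := by
    intro j
    refine Finset.single_le_sum (f := fun j => c * (v j e ⬝ᵥ (P j)⁻¹ *ᵥ v j e))
      (fun j _ => mul_nonneg hc.le ?_) (Finset.mem_univ j)
    simpa using (hP j).inv.posSemidef.dotProduct_mulVec_nonneg (v j e)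
  have hrank := fun j => posDef_sub_rankOne_and_trace_inv (hP j) (v j e) hc.le
    (lt_of_le_of_lt (hxj j) (by linarith))
  refine ⟨e, he, fun j => (hrank j).1, ?_⟩
  have hle : ∀ j, (P j - c • vecMulVec (v j e) (v j e))⁻¹.trace ≤
      (P j)⁻¹.trace + c * (((P j)⁻¹ *ᵥ v j e) ⬝ᵥ ((P j)⁻¹ *ᵥ v j e)) / (1 - x e) := by
    intro j
    rw [(hrank j).2]
    have h0 : 0 ≤ ((P j)⁻¹ *ᵥ v j e) ⬝ᵥ ((P j)⁻¹ *ᵥ v j e) := by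
      simpa using dotProduct_star_self_nonneg ((P j)⁻¹ *ᵥ v j e)
    have := hxj j
    gcongr
  calc _ ≤ ∑ j, ((P j)⁻¹.trace +
        c * (((P j)⁻¹ *ᵥ v j e) ⬝ᵥ ((P j)⁻¹ *ᵥ v j e)) / (1 - x e)) :=
        Finset.sum_le_sum fun j _ => hle j
    _ = ∑ j, (P j)⁻¹.trace + y e / (1 - x e) := by
        rw [Finset.sum_add_distrib, ← Finset.sum_div]
    _ ≤ ∑ j, (P j)⁻¹.trace + D := by
        gcongr; rwa [div_le_iff₀ hx1]
    _ ≤ _ := by linarith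

/-- From two families of `m` rank-one matrices, each with sum at most `2 d I`, the same `k` indices
can be selected so that both rescaled partial sums exceed the full sums by at most `40 ε d I`. -/
theorem exists_subset_upper_bound {ι V : Type*} [Fintype ι] [DecidableEq ι] [Fintype V]
    [DecidableEq V] (v : Bool → ι → V → ℝ) (hv : ∀ j e, v j e ≠ 0) {d ε : ℝ} (hd : 0 < d)
    (hM : ∀ j, ((2 * d) • (1 : Matrix V V ℝ) - ∑ e, vecMulVec (v j e) (v j e)).PosSemidef)
    (hε : 0 < ε) (hε1 : ε < 1) {k m : ℕ} (hm : Fintype.card ι = m) (hk : 0 < k)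
    (hkm : 2 * k ≤ m) (hn : (Fintype.card V : ℝ) ≤ ε ^ 2 * k) :
    ∃ F : Finset ι, F.card = k ∧ ∀ j, ((40 * ε * d) • (1 : Matrix V V ℝ) -
      (((m : ℝ) / k) • ∑ e ∈ F, vecMulVec (v j e) (v j e) -
        ∑ e, vecMulVec (v j e) (v j e))).PosSemidef := by
  have hk' : (0 : ℝ) < k := by exact_mod_cast hk
  have hkm' : 2 * (k : ℝ) ≤ m := by exact_mod_cast hkm
  have hm' : (0 : ℝ) < m := by linarith
  have hQ : ∀ j e, (vecMulVec (v j e) (v j e)).PosSemidef := fun j e => by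
    simpa using posSemidef_vecMulVec_self_star (v j e)
  set u₀ : ℝ := 32 * ε * d * k / m ^ 2 with hu₀
  set δ : ℝ := 8 * ε * d / m ^ 2 with hδ
  have hu₀pos : 0 < u₀ := by positivity
  have hδpos : 0 < δ := by positivity
  -- The barrier matrix after `t` steps, where `S` is the set of indices not yet selected.
  set B : ℕ → Finset ι → Bool → Matrix V V ℝ := fun t S j =>
    (u₀ + t * δ) • (1 : Matrix V V ℝ) - (m : ℝ)⁻¹ • ∑ e, vecMulVec (v j e) (v j e) +
      (S.card : ℝ)⁻¹ • ∑ e ∈ S, vecMulVec (v j e) (v j e) with hB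
  have hiter : ∀ t ≤ k, ∃ S : Finset ι, S.card + t = m ∧ (∀ j, (B t S j).PosDef) ∧
      ∑ j, (B t S j)⁻¹.trace ≤ 2 * Fintype.card V / u₀ := by
    intro t
    induction t with
    | zero =>
      intro _
      have hB0 : ∀ j, B 0 Finset.univ j = u₀ • (1 : Matrix V V ℝ) := by
        intro j
        simp [hB, hm]
      refine ⟨Finset.univ, by simpa using hm, fun j => ?_, ?_⟩
      · rw [hB0]; exact PosDef.one.smul hu₀pos
      · have hinv : (u₀ • (1 : Matrix V V ℝ))⁻¹ = u₀⁻¹ • (1 : Matrix V V ℝ) := by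
          apply inv_eq_right_inv
          rw [smul_mul_smul_comm, mul_one, mul_inv_cancel₀ hu₀pos.ne', one_smul]
        simp only [hB0, hinv, trace_smul, trace_one, smul_eq_mul, Fintype.sum_bool]
        apply le_of_eq
        field_simp
        ring
    | succ t ih =>
      intro ht
      obtain ⟨S, hcard, hpd, htr⟩ := ih (by omega)
      have hcard' : (S.card : ℝ) + t = m := by exact_mod_cast hcard
      have htk : (t : ℝ) + 1 ≤ k := by exact_mod_cast ht
      have hr1 : (m : ℝ) / 2 ≤ (S.card : ℝ) - 1 := by linarith
      have hr1pos : (0 : ℝ) < (S.card : ℝ) - 1 := by linarith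
      have hrpos : (0 : ℝ) < S.card := by linarith
      have hSne : S.Nonempty := Finset.card_pos.1 (by exact_mod_cast hrpos)
      set c : ℝ := ((S.card : ℝ) - 1)⁻¹ with hc
      have hcpos : 0 < c := inv_pos.2 hr1pos
      have hcle : c ≤ 2 / m := by
        rw [hc, inv_le_comm₀ hr1pos (by positivity), inv_div]; exact hr1
      have hrle : (S.card : ℝ)⁻¹ ≤ 2 / m := by
        rw [inv_le_comm₀ hrpos (by positivity), inv_div]; linarith
      obtain ⟨e, he, hpd', htr'⟩ := exists_barrier_step v S hSne (fun j e _ => hv j e)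
        (B t S) (fun j => (S.card : ℝ)⁻¹ • ∑ e ∈ S, vecMulVec (v j e) (v j e)) hpd
        (fun j => by rw [smul_smul, mul_inv_cancel₀ hrpos.ne', one_smul])
        (c := c) (ρ := 4 * d / m) (δ := δ) (θ := ε / 2) hcpos
        (by
          intro j
          have hsub : (∑ e, vecMulVec (v j e) (v j e) -
              ∑ e ∈ S, vecMulVec (v j e) (v j e)).PosSemidef := by
            rw [← Finset.sum_sdiff (Finset.subset_univ S), add_sub_cancel_right]
            exact posSemidef_sum _ fun e _ => hQ j e
          have h1 := ((hM j).add hsub).smul (inv_nonneg.2 hrpos.le)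
          have h2 := (PosSemidef.one (n := V) (R := ℝ)).smul
            (show 0 ≤ 4 * d / m - (S.card : ℝ)⁻¹ * (2 * d) by
              have := mul_le_mul_of_nonneg_right hrle (show 0 ≤ 2 * d by positivity)
              have e1 : 2 / (m : ℝ) * (2 * d) = 4 * d / m := by ring
              linarith)
          convert h1.add h2 using 1
          module)
        (by positivity) hδpos
        (by
          calc c * (4 * d / m) * ∑ j, (B t S j)⁻¹.trace
              ≤ 2 / m * (4 * d / m) * (2 * (ε ^ 2 * k) / u₀) := by
                refine mul_le_mul (by gcongr) (htr.trans (by gcongr)) ?_ (by positivity)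
                exact Finset.sum_nonneg fun j _ => (hpd j).inv.posSemidef.trace_nonneg
            _ = ε / 2 := by rw [hu₀]; field_simp; norm_num)
        (by linarith)
        (by
          calc 2 * (ε / 2) * (c * (4 * d / m)) ≤ 2 * (ε / 2) * (2 / m * (4 * d / m)) := by gcongr
            _ = δ := by rw [hδ]; ring)
      have hBe : ∀ j, B (t + 1) (S.erase e) j = B t S j + δ • (1 : Matrix V V ℝ) +
          c • ((S.card : ℝ)⁻¹ • ∑ e ∈ S, vecMulVec (v j e) (v j e)) -
          c • vecMulVec (v j e) (v j e) := by
        intro j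
        have hce : ((S.erase e).card : ℝ)⁻¹ = c := by
          rw [Finset.card_erase_of_mem he, Nat.cast_pred (Finset.card_pos.2 hSne)]
        have hsum := Finset.add_sum_erase S (fun e => vecMulVec (v j e) (v j e)) he
        have hcc : c = (S.card : ℝ)⁻¹ + c * (S.card : ℝ)⁻¹ := by
          rw [hc]; field_simp; ring
        simp only [hB, hce]
        rw [← eq_sub_iff_add_eq'] at hsum
        rw [hsum, smul_sub]
        nth_rewrite 1 [hcc]
        push_cast
        module
      refine ⟨S.erase e, ?_, fun j => ?_, ?_⟩
      · rw [Finset.card_erase_of_mem he]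
        have := Finset.card_pos.2 hSne
        omega
      · rw [hBe]; exact hpd' j
      · simp only [hBe]; exact htr'.trans htr
  obtain ⟨S, hcard, hpd, -⟩ := hiter k le_rfl
  have hcard' : (S.card : ℝ) + k = m := by exact_mod_cast hcard
  have hrpos : (0 : ℝ) < S.card := by linarith
  refine ⟨Sᶜ, by rw [Finset.card_compl, hm]; omega, fun j => ?_⟩
  have hs : ∑ e ∈ S, vecMulVec (v j e) (v j e) =
      ∑ e, vecMulVec (v j e) (v j e) - ∑ e ∈ Sᶜ, vecMulVec (v j e) (v j e) := by
    rw [eq_sub_iff_add_eq, Finset.sum_add_sum_compl]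
  have h1 := (hpd j).posSemidef.smul (show 0 ≤ (S.card : ℝ) * m / k by positivity)
  have hu : u₀ + k * δ = 40 * ε * d * k / m ^ 2 := by rw [hu₀, hδ]; ring
  have h2 := (PosSemidef.one (n := V) (R := ℝ)).smul
    (show 0 ≤ 40 * ε * d - (S.card : ℝ) * m / k * (u₀ + k * δ) by
      have e1 : (S.card : ℝ) * m / k * (u₀ + k * δ) = 40 * ε * d * (S.card / m) := by
        rw [hu]; field_simp
      have e2 : (S.card : ℝ) / m ≤ 1 := by rw [div_le_one hm']; linarith
      have := mul_le_mul_of_nonneg_left e2 (show 0 ≤ 40 * ε * d by positivity)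
      rw [e1]; linarith)
  convert h1.add h2 using 1
  simp only [hB, hs]
  have c1 : (S.card : ℝ) * m / k * (m : ℝ)⁻¹ = m / k - 1 := by
    field_simp; linarith
  have c2 : (S.card : ℝ) * m / k * (S.card : ℝ)⁻¹ = m / k := by
    field_simp
  rw [smul_add, smul_sub, smul_smul, smul_smul, smul_smul, c1, c2]
  module

/-! ### Application to graphs -/

/-- The sum of the Laplacian and the signless Laplacian of an edge set is twice its degree
matrix. -/
theorem sum_vecMulVec_add_signless {ι V : Type*} [Fintype V] [DecidableEq V]
    (E : ι → V × V) (hE : ∀ e, (E e).1 ≠ (E e).2) (F : Finset ι) :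
    (∑ e ∈ F, vecMulVec (fun w => (if w = (E e).1 then (1 : ℝ) else 0) -
        (if w = (E e).2 then 1 else 0)) (fun w => (if w = (E e).1 then (1 : ℝ) else 0) -
        (if w = (E e).2 then 1 else 0))) +
      ∑ e ∈ F, vecMulVec (fun w => (if w = (E e).1 then (1 : ℝ) else 0) +
        (if w = (E e).2 then 1 else 0)) (fun w => (if w = (E e).1 then (1 : ℝ) else 0) +
        (if w = (E e).2 then 1 else 0)) =
      (2 : ℝ) • Matrix.diagonal (fun v =>
        (((F.filter fun e => (E e).1 = v ∨ (E e).2 = v).card : ℕ) : ℝ)) := by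
  rw [← Finset.sum_add_distrib]
  ext i j
  rw [Matrix.sum_apply, Matrix.smul_apply, Matrix.diagonal_apply, Finset.card_filter]
  push_cast
  by_cases hij : i = j
  · subst hij
    rw [if_pos rfl, smul_eq_mul, Finset.mul_sum]
    refine Finset.sum_congr rfl fun e _ => ?_
    have := hE e
    simp only [Matrix.add_apply, vecMulVec_apply]
    by_cases h1 : i = (E e).1 <;> by_cases h2 : i = (E e).2 <;>
      simp_all [eq_comm] <;> norm_num
  · rw [if_neg hij, smul_zero]
    refine Finset.sum_eq_zero fun e _ => ?_
    have h1 : ¬ (i = (E e).1 ∧ j = (E e).1) := fun h => hij (h.1.trans h.2.symm)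
    have h2 : ¬ (i = (E e).2 ∧ j = (E e).2) := fun h => hij (h.1.trans h.2.symm)
    simp only [Matrix.add_apply, vecMulVec_apply]
    split_ifs <;> simp_all

/-- **Deterministic additive unweighted spectral sparsification with no parallel edges.**
There is a universal constant `K > 0` such that for every simple graph `G` on `n` vertices
with `m` edges (edge list `E : Fin m → V × V`, distinct endpoints, pairwise distinct
unordered pairs), maximum degree `d`, and `ε ∈ (0, 1)` with `m ≥ 2⌈n/ε²⌉`, there exists
a subset `F` of the edges with `|F| = ⌈n/ε²⌉` such that, writing `m̃ := |F|`,
`2 (m/m̃) D_{G̃} - 2 D_G - K ε d Iₙ ⪯ (m/m̃) L_{G̃} - L_G ⪯ K ε d Iₙ`,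
where `L` and `D` denote Laplacian and diagonal degree matrices. -/
theorem additive_unweighted_sparsifier_deterministic :
    ∃ K : ℝ, 0 < K ∧
      ∀ (n m : ℕ) (E : Fin m → Fin n × Fin n) (b : Fin m → Fin n → ℝ) (d : ℕ) (ε : ℝ)
        (LG DG : Matrix (Fin n) (Fin n) ℝ),
        (∀ e, (E e).1 ≠ (E e).2) →
        (∀ e e', ({(E e).1, (E e).2} : Finset (Fin n)) = {(E e').1, (E e').2} → e = e') →
        b = (fun e w => (if w = (E e).1 then (1 : ℝ) else 0) - (if w = (E e).2 then 1 else 0)) →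
        d = (Finset.univ.sup fun v : Fin n =>
          (Finset.univ.filter fun e => (E e).1 = v ∨ (E e).2 = v).card) →
        LG = (∑ e, vecMulVec (b e) (b e)) →
        DG = Matrix.diagonal (fun v =>
          (((Finset.univ.filter fun e => (E e).1 = v ∨ (E e).2 = v).card : ℕ) : ℝ)) →
        0 < ε → ε < 1 → 2 * ⌈(n : ℝ) / ε^2⌉₊ ≤ m →
        ∃ F : Finset (Fin m), F.card = ⌈(n : ℝ) / ε^2⌉₊ ∧
          ∀ (LF DF : Matrix (Fin n) (Fin n) ℝ),
            LF = (∑ e ∈ F, vecMulVec (b e) (b e)) →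
            DF = Matrix.diagonal (fun v =>
              (((F.filter fun e => (E e).1 = v ∨ (E e).2 = v).card : ℕ) : ℝ)) →
            ((((m : ℝ) / (F.card : ℝ)) • LF - LG) -
              ((2 * (m : ℝ) / (F.card : ℝ)) • DF - (2 : ℝ) • DG -
                (K * ε * d) • (1 : Matrix (Fin n) (Fin n) ℝ))).PosSemidef ∧
            ((K * ε * d) • (1 : Matrix (Fin n) (Fin n) ℝ) -
              (((m : ℝ) / (F.card : ℝ)) • LF - LG)).PosSemidef := by
  refine ⟨40, by norm_num, ?_⟩
  intro n m E b d ε LG DG hE _ hb hd hLG hDG hε hε1 hm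
  set k := ⌈(n : ℝ) / ε ^ 2⌉₊ with hk
  rcases Nat.eq_zero_or_pos n with hn | hn
  · -- with no vertices all matrices are empty
    subst hn
    refine ⟨∅, by simp [hk], ?_⟩
    intro LF DF _ _
    constructor <;>
    · rw [Subsingleton.elim (_ - _ : Matrix (Fin 0) (Fin 0) ℝ) 0]
      exact PosSemidef.zero
  have hn' : (0 : ℝ) < n := by exact_mod_cast hn
  have hkpos : 0 < k := Nat.ceil_pos.2 (by positivity)
  have hmpos : 0 < m := by omega
  have hdeg : ∀ w : Fin n,
      (Finset.univ.filter fun e => (E e).1 = w ∨ (E e).2 = w).card ≤ d := fun w => by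
    rw [hd]
    exact Finset.le_sup (f := fun v : Fin n =>
      (Finset.univ.filter fun e => (E e).1 = v ∨ (E e).2 = v).card) (Finset.mem_univ w)
  have hdpos : 0 < d := by
    refine lt_of_lt_of_le (Finset.card_pos.2 ⟨⟨0, hmpos⟩, ?_⟩) (hdeg (E ⟨0, hmpos⟩).1)
    simp
  set s : Fin m → Fin n → ℝ := fun e w =>
    (if w = (E e).1 then (1 : ℝ) else 0) + (if w = (E e).2 then 1 else 0) with hs
  have hsum : ∀ F : Finset (Fin m),
      ∑ e ∈ F, vecMulVec (b e) (b e) + ∑ e ∈ F, vecMulVec (s e) (s e) =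
      (2 : ℝ) • Matrix.diagonal (fun v =>
        (((F.filter fun e => (E e).1 = v ∨ (E e).2 = v).card : ℕ) : ℝ)) := by
    intro F
    rw [hb]
    exact sum_vecMulVec_add_signless E hE F
  have hpsd : ∀ a : Fin m → Fin n → ℝ, (∑ e, vecMulVec (a e) (a e)).PosSemidef := fun a =>
    posSemidef_sum _ fun e _ => by simpa using posSemidef_vecMulVec_self_star (a e)
  have hDpsd : ((2 : ℝ) • ((d : ℝ) • (1 : Matrix (Fin n) (Fin n) ℝ) - DG)).PosSemidef := by
    refine PosSemidef.smul ?_ (by norm_num)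
    rw [hDG, smul_one_eq_diagonal, diagonal_sub]
    exact PosSemidef.diagonal fun w => sub_nonneg.2 (Nat.cast_le.2 (hdeg w))
  have hsumG := hsum Finset.univ
  rw [← hDG] at hsumG
  obtain ⟨F, hF, hbound⟩ := exists_subset_upper_bound (fun j : Bool => if j then b else s)
    (by
      intro j e h
      have h1 := congrFun h (E e).1
      have := hE e
      cases j <;> simp [hb, hs, this] at h1)
    (d := d) (ε := ε) (by exact_mod_cast hdpos)
    (by
      intro j
      cases j
      · convert hDpsd.add (hpsd b) using 1
        have : ∑ e, vecMulVec (b e) (b e) =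
          (2 : ℝ) • DG - ∑ e, vecMulVec (s e) (s e) := eq_sub_of_add_eq hsumG
        rw [this]
        simp only [Bool.false_eq_true, if_false]
        module
      · convert hDpsd.add (hpsd s) using 1
        have : ∑ e, vecMulVec (s e) (s e) =
          (2 : ℝ) • DG - ∑ e, vecMulVec (b e) (b e) := eq_sub_of_add_eq' hsumG
        rw [this]
        simp only [if_true]
        module)
    hε hε1 (Fintype.card_fin m) hkpos hm
    (by
      rw [Fintype.card_fin]
      have := Nat.le_ceil ((n : ℝ) / ε ^ 2)
      rw [div_le_iff₀ (by positivity)] at this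
      linarith)
  refine ⟨F, hF, ?_⟩
  intro LF DF hLF hDF
  have hsumF := hsum F
  rw [← hDF, ← hLF] at hsumF
  rw [← hLG] at hsumG
  have hbt := hbound true
  have hbf := hbound false
  simp only [if_true, Bool.false_eq_true, if_false] at hbt hbf
  rw [← hLF, ← hLG] at hbt
  rw [eq_sub_of_add_eq' hsumF, eq_sub_of_add_eq' hsumG] at hbf
  rw [hF]
  refine ⟨?_, hbt⟩
  convert hbf using 1
  rw [mul_div_assoc]
  module
end

section
/- Let v_1, …, v_m ∈ ℝ^n and x ∈ [0,1]^m satisfy Σ_{i=1}^m x_i v_i v_iᵀ = I_n, let ε ∈ (0, 1/2), and set α := √n/ε and k := m + 2n/ε. Let S ⊆ [m], let Z := Σ_{i ∈ S} v_i v_iᵀ, and let A := (α·Z − ℓ·I_n)^{−2}, where ℓ ∈ ℝ is the unique value with ℓ < α·λ_min(Z) such that tr(A) = 1. Define S' := { i ∈ S : 2α·⟨v_i v_iᵀ, A^{1/2}⟩ < 1/2 }, where A^{1/2} = (α·Z − ℓ·I_n)^{−1}. Then (1/k)·Σ_{j ∈ [m]∖S} x_j·⟨v_j v_jᵀ, A⟩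 − (1/k)·Σ_{i ∈ S'} (1 − x_i)·⟨v_i v_iᵀ, A⟩ ≥ (1/k)·(1 − ε − λ_min(Z)). (Single-step expected spectral progress of the iterative randomized swapping algorithm.) -/
/-!
Write `M = α Z - ℓ I`, so that `Asq = M⁻¹` and `A = M⁻²`, and `aᵢ = ⟨vᵢvᵢᵀ, A⟩ = ‖Asq vᵢ‖² ≥ 0`.
The decomposition of the identity gives `∑_{j ∉ S} xⱼ aⱼ = tr A - ∑_{i ∈ S} xᵢ aᵢ`. Since `S' ⊆ S`,
`1 - xᵢ ≥ 0` and `aᵢ ≥ 0`, replacing `S'` by `S` only lowers the left-over expression, which is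
therefore at least `1 - ∑_{i ∈ S} aᵢ = 1 - ⟨Z, A⟩`. Finally `α Z A = (M + ℓ I) M⁻² = M⁻¹ + ℓ M⁻²`,
so `α ⟨Z, A⟩ = tr M⁻¹ + ℓ ≤ √n + α λ_min(Z)`, by Cauchy–Schwarz in the form
`tr M⁻¹ ≤ √(n tr M⁻²) = √n` (`sq_trace_le_of_isSymm`). Dividing by `α = √n / ε` bounds
`⟨Z, A⟩` by `ε + λ_min(Z)`.
-/

open Matrix BigOperators

/-- Cauchy–Schwarz for the Frobenius inner product of a symmetric matrix with the identity. -/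
theorem sq_trace_le_of_isSymm {n : ℕ} {B : Matrix (Fin n) (Fin n) ℝ} (hB : B.IsSymm) :
    B.trace ^ 2 ≤ n * (B ^ 2).trace := by
  have h1 : B.trace ^ 2 ≤ n * ∑ i, B i i ^ 2 := by
    have := sq_sum_le_card_mul_sum_sq (s := (Finset.univ : Finset (Fin n))) (f := fun i => B i i)
    simpa [Matrix.trace] using this
  refine h1.trans (mul_le_mul_of_nonneg_left ?_ (Nat.cast_nonneg n))
  simp only [Matrix.trace, Matrix.diag, pow_two B, Matrix.mul_apply]
  refine Finset.sum_le_sum fun i _ => ?_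
  have h2 : ∀ j, B i j * B j i = B i j ^ 2 := fun j => by rw [hB.apply i j, sq]
  simp only [h2]
  exact Finset.single_le_sum (f := fun j => B i j ^ 2) (fun j _ => sq_nonneg _) (Finset.mem_univ i)

theorem trace_vecMulVec_mul_sq_nonneg {n : ℕ} {B : Matrix (Fin n) (Fin n) ℝ} (hB : B.IsSymm)
    (w : Fin n → ℝ) : 0 ≤ (vecMulVec w w * B ^ 2).trace := by
  -- The trace is the squared Euclidean norm of `w ᵥ* B`.
  have h : (vecMulVec w w * B ^ 2).trace = (w ᵥ* B) ⬝ᵥ (w ᵥ* B) := by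
    rw [vecMulVec_mul, trace_vecMulVec, pow_two, ← vecMul_vecMul, dotProduct_comm,
      ← dotProduct_mulVec, ← vecMul_transpose, hB.eq]
  rw [h]
  exact Finset.sum_nonneg fun i _ => mul_self_nonneg _

/-- **Single-step expected spectral progress of the iterative randomized swapping
algorithm (Lemma 3.3).** With `α := √n/ε`, `k := m + 2n/ε`, current solution `S` with
`Z := ∑_{i ∈ S} vᵢ vᵢᵀ`, action matrix `A := (α Z - ℓ Iₙ)⁻²` normalized so that
`tr(A) = 1` (where `ℓ < α λ_min(Z)`), `A^{1/2} = (α Z - ℓ Iₙ)⁻¹`, and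
`S' := {i ∈ S : 2α ⟨vᵢvᵢᵀ, A^{1/2}⟩ < 1/2}`, one has
`(1/k) ∑_{j ∉ S} xⱼ ⟨vⱼvⱼᵀ, A⟩ - (1/k) ∑_{i ∈ S'} (1 - xᵢ) ⟨vᵢvᵢᵀ, A⟩
  ≥ (1/k)(1 - ε - λ_min(Z))`. -/
theorem swapping_expected_spectral_progress {n m : ℕ}
    (v : Fin m → Fin n → ℝ) (x : Fin m → ℝ) (ε α k ℓ lam : ℝ)
    (hx : ∀ i, 0 ≤ x i ∧ x i ≤ 1)
    (hsum : (∑ i, x i • vecMulVec (v i) (v i)) = (1 : Matrix (Fin n) (Fin n) ℝ))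
    (hε0 : 0 < ε) (hε1 : ε < 1/2)
    (hα : α = Real.sqrt n / ε) (hk : k = m + 2 * n / ε)
    (S : Finset (Fin m)) (Z A Asq : Matrix (Fin n) (Fin n) ℝ)
    (hZ : Z = ∑ i ∈ S, vecMulVec (v i) (v i))
    (hlam : IsGreatest {t : ℝ | (Z - t • 1).PosSemidef} lam)
    (hℓ : ℓ < α * lam)
    (hAsq : Asq = (α • Z - ℓ • 1)⁻¹)
    (hA : A = Asq ^ 2)
    (htr : A.trace = 1)
    (S' : Finset (Fin m))
    (hS' : S' = S.filter fun i => 2 * α * (vecMulVec (v i) (v i) * Asq).trace < 1/2) :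
    (1/k) * (1 - ε - lam) ≤
      (1/k) * (∑ j ∈ Sᶜ, x j * (vecMulVec (v j) (v j) * A).trace)
        - (1/k) * (∑ i ∈ S', (1 - x i) * (vecMulVec (v i) (v i) * A).trace) := by
  have hZs : Z.IsSymm := by
    rw [hZ, IsSymm, transpose_sum]
    simp [transpose_vecMulVec]
  have hBs : Asq.IsSymm := by
    rw [hAsq, IsSymm, transpose_nonsing_inv]
    simp [hZs.eq]
  -- Otherwise the inverse is the junk value `0`, contradicting `tr A = 1`.
  have hdet : IsUnit (α • Z - ℓ • (1 : Matrix (Fin n) (Fin n) ℝ)).det := by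
    by_contra h
    rw [hA, hAsq, nonsing_inv_apply_not_isUnit _ h] at htr
    simp at htr
  have hn : 0 < n := by
    rcases Nat.eq_zero_or_pos n with rfl | h
    · simp [Matrix.trace] at htr
    · exact h
  have hsn : 0 < Real.sqrt n := Real.sqrt_pos.mpr (by exact_mod_cast hn)
  have hαpos : 0 < α := by rw [hα]; positivity
  have hεα : α * ε = Real.sqrt n := by rw [hα]; field_simp
  have hk0 : 0 ≤ k := by rw [hk]; positivity
  have htrB : Asq.trace ≤ Real.sqrt n := by
    apply Real.le_sqrt_of_sq_le
    have h := sq_trace_le_of_isSymm hBs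
    rw [← hA, htr, mul_one] at h
    exact h
  have hMB : (α • Z - ℓ • (1 : Matrix (Fin n) (Fin n) ℝ)) * A = Asq := by
    rw [hA, pow_two, ← Matrix.mul_assoc, hAsq, mul_nonsing_inv _ hdet, Matrix.one_mul]
  have hZA : α * (Z * A).trace = Asq.trace + ℓ := by
    have h := congrArg Matrix.trace hMB
    rw [sub_mul, trace_sub, smul_mul, smul_mul, trace_smul, trace_smul, Matrix.one_mul, htr,
      smul_eq_mul, smul_eq_mul] at h
    linarith
  have hZA' : (Z * A).trace ≤ ε + lam := by
    refine le_of_mul_le_mul_left ?_ hαpos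
    rw [hZA, mul_add, hεα]
    linarith
  have ha : ∀ i, 0 ≤ (vecMulVec (v i) (v i) * A).trace := fun i => by
    rw [hA]; exact trace_vecMulVec_mul_sq_nonneg hBs _
  have hZsum : (Z * A).trace = ∑ i ∈ S, (vecMulVec (v i) (v i) * A).trace := by
    rw [hZ, Finset.sum_mul, trace_sum]
  have hone : ∑ i, x i * (vecMulVec (v i) (v i) * A).trace = 1 := by
    have h := congrArg (fun X => (X * A).trace) hsum
    simpa [Finset.sum_mul, trace_sum, htr] using h
  rw [← Finset.sum_add_sum_compl S] at hone
  have hsub : ∑ i ∈ S', (1 - x i) * (vecMulVec (v i) (v i) * A).trace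
      ≤ ∑ i ∈ S, (1 - x i) * (vecMulVec (v i) (v i) * A).trace := by
    refine Finset.sum_le_sum_of_subset_of_nonneg (hS' ▸ Finset.filter_subset _ _) fun i _ _ => ?_
    exact mul_nonneg (by linarith [(hx i).2]) (ha i)
  simp only [sub_mul (1 : ℝ), one_mul, Finset.sum_sub_distrib] at hsub
  rw [← mul_sub]
  refine mul_le_mul_of_nonneg_left ?_ (by positivity)
  simp only [sub_mul (1 : ℝ), one_mul, Finset.sum_sub_distrib]
  linarith
end

section
/- Let v_1, …, v_m ∈ ℝ^n and x ∈ [0,1]^m satisfy Σ_{i=1}^m x_i v_i v_iᵀ = I_n, let c ∈ ℝ_+^m, let ε ∈ (0, 1/2), and set α := √n/ε and k := m + 2n/ε. Let S ⊆ [m], let Z := Σ_{i ∈ S} v_i v_iᵀ, and suppose λ_min(Z) < 1. Let A := (α·Z − ℓ·I_n)^{−2}, where ℓ ∈ ℝ is the unique value with ℓ < α·λ_min(Z) such that tr(A) = 1, and define S' := { i ∈ S : 2α·⟨v_i v_iᵀ, A^{1/2}⟩ < 1/2 }, where A^{1/2} = (α·Z − ℓ·I_n)^{−1}. Define E⁺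 := (1/k)·Σ_{j ∈ [m]∖S} c_j·x_j·(1 + 2α·⟨v_j v_jᵀ, A^{1/2}⟩) and E⁻ := (1/k)·Σ_{i ∈ S'} c_i·(1 − x_i)·(1 − 2α·⟨v_i v_iᵀ, A^{1/2}⟩). Then (1/k)·(⟨c, x⟩ − c(S)) ≤ E⁺ − E⁻ ≤ (1/k)·(⟨c, x⟩ − c(S) + 14·n·c_∞/ε), where c(S) := Σ_{i ∈ S} c_i. (Single-step expected cost change of the iterative randomized swapping algorithm.) -/
/-!
Write `tᵢ = 2α⟨vᵢvᵢᵀ, A^{1/2}⟩`. Expanding,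
`k(E⁺ - E⁻) - (⟨c,x⟩ - c(S)) = ∑_{j ∉ S} cⱼxⱼtⱼ + ∑_{S'} cᵢ(1-xᵢ)tᵢ + ∑_{S \ S'} cᵢ(1-xᵢ)`.
Since `αZ - ℓI` is positive definite, all `tᵢ ≥ 0`, so this excess is nonnegative, which is the
lower bound. For the upper bound, `1 ≤ 2tᵢ` on `S \ S'`, so the excess is at most
`c_∞ (∑ᵢ xᵢtᵢ + 2 ∑_{i ∈ S} tᵢ) = c_∞ (2α tr A^{1/2} + 4α ⟨Z, A^{1/2}⟩)`.
Here `tr A^{1/2} ≤ √n` by Cauchy–Schwarz and `tr A = 1` (`trace_le_sqrt`), and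
`α ⟨Z, A^{1/2}⟩ = n + ℓ tr A^{1/2} ≤ n + n/ε` because `ℓ < α λ_min(Z) ≤ α`. The total is at
most `c_∞ (6n/ε + 4n) ≤ 8 n c_∞ / ε`.
-/

open Matrix BigOperators

/-- Cauchy–Schwarz on the diagonal of a symmetric matrix `B` with `‖B‖_F² = tr B² = 1`. -/
lemma trace_le_sqrt {n : ℕ} (B : Matrix (Fin n) (Fin n) ℝ) (hB : B.IsSymm)
    (htr : (B ^ 2).trace = 1) : B.trace ≤ Real.sqrt n := by
  apply Real.le_sqrt_of_sq_le
  have h1 : B.trace ^ 2 ≤ n * ∑ i, B i i ^ 2 := by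
    have := sq_sum_le_card_mul_sum_sq (s := (Finset.univ : Finset (Fin n))) (f := fun i => B i i)
    simpa [Matrix.trace] using this
  have h2 : ∑ i, B i i ^ 2 ≤ (B ^ 2).trace := by
    rw [pow_two B, Matrix.trace]
    refine Finset.sum_le_sum fun i _ => ?_
    rw [Matrix.diag_apply, Matrix.mul_apply]
    have h3 : ∀ j, B i j * B j i = B i j ^ 2 := fun j => by rw [hB.apply i j, pow_two]
    simp_rw [h3]
    exact Finset.single_le_sum (f := fun j => B i j ^ 2) (fun j _ => sq_nonneg _)
      (Finset.mem_univ i)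
  rw [htr] at h2
  have : (0 : ℝ) ≤ n := by positivity
  nlinarith

/-- The scalar part of the argument: `t` is nonnegative on all indices and `T` bounds
`∑ xᵢtᵢ + 2 ∑_{S} tᵢ`. -/
lemma cost_excess_bounds {m : ℕ} (x c t : Fin m → ℝ) (C T : ℝ)
    (hx : ∀ i, 0 ≤ x i ∧ x i ≤ 1) (hc : ∀ i, 0 ≤ c i) (hC : ∀ i, c i ≤ C) (hC0 : 0 ≤ C)
    (ht : ∀ i, 0 ≤ t i) (S : Finset (Fin m))
    (hT : ∑ i, x i * t i + 2 * ∑ i ∈ S, t i ≤ T) :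
    ((∑ i, c i * x i) - ∑ i ∈ S, c i) ≤
      ∑ j ∈ Sᶜ, c j * x j * (1 + t j) -
        ∑ i ∈ S.filter (fun i => t i < 1 / 2), c i * (1 - x i) * (1 - t i) ∧
    ∑ j ∈ Sᶜ, c j * x j * (1 + t j) -
        ∑ i ∈ S.filter (fun i => t i < 1 / 2), c i * (1 - x i) * (1 - t i) ≤
      ((∑ i, c i * x i) - ∑ i ∈ S, c i) + C * T := by
  rw [Finset.sum_filter]
  rw [← Finset.sum_add_sum_compl S (fun i => c i * x i)]
  rw [← Finset.sum_add_sum_compl S (fun i => x i * t i)] at hT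
  have hp1 : ∑ j ∈ Sᶜ, c j * x j ≤ ∑ j ∈ Sᶜ, c j * x j * (1 + t j) := by
    refine Finset.sum_le_sum fun i _ => ?_
    have := mul_nonneg (mul_nonneg (hc i) (hx i).1) (ht i)
    linarith
  have hp2 : ∑ j ∈ Sᶜ, c j * x j * (1 + t j) ≤
      ∑ j ∈ Sᶜ, c j * x j + C * ∑ j ∈ Sᶜ, x j * t j := by
    rw [Finset.mul_sum, ← Finset.sum_add_distrib]
    refine Finset.sum_le_sum fun i _ => ?_
    have := mul_le_mul_of_nonneg_right (hC i) (mul_nonneg (hx i).1 (ht i))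
    linarith
  have hm1 : ∑ i ∈ S, (if t i < 1 / 2 then c i * (1 - x i) * (1 - t i) else 0) ≤
      ∑ i ∈ S, c i - ∑ i ∈ S, c i * x i := by
    rw [← Finset.sum_sub_distrib]
    refine Finset.sum_le_sum fun i _ => ?_
    have h0 := mul_nonneg (hc i) (sub_nonneg.2 (hx i).2)
    have := mul_nonneg h0 (ht i)
    split_ifs <;> linarith
  have hm2 : ∑ i ∈ S, c i - ∑ i ∈ S, c i * x i ≤
      ∑ i ∈ S, (if t i < 1 / 2 then c i * (1 - x i) * (1 - t i) else 0) +
        C * (2 * ∑ i ∈ S, t i) := by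
    rw [← Finset.sum_sub_distrib, Finset.mul_sum, Finset.mul_sum, ← Finset.sum_add_distrib]
    refine Finset.sum_le_sum fun i _ => ?_
    have h0 := mul_nonneg (hc i) (sub_nonneg.2 (hx i).2)
    have h1 : c i * (1 - x i) ≤ C := by
      have := mul_nonneg (hc i) (hx i).1
      linarith [hC i]
    have h2 := mul_le_mul_of_nonneg_right h1 (ht i)
    have h3 := mul_nonneg hC0 (ht i)
    split_ifs with h
    · linarith
    · have h4 := mul_le_mul_of_nonneg_left (not_lt.1 h) hC0
      linarith
  have hxS : 0 ≤ ∑ i ∈ S, x i * t i :=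
    Finset.sum_nonneg fun i _ => mul_nonneg (hx i).1 (ht i)
  have hCT := mul_le_mul_of_nonneg_left hT hC0
  have hCx := mul_nonneg hC0 hxS
  constructor <;> linarith

/-- **Single-step expected cost change of the iterative randomized swapping algorithm
(Lemma 3.6).** With `α := √n/ε`, `k := m + 2n/ε`, current solution `S` with
`Z := ∑_{i ∈ S} vᵢ vᵢᵀ` satisfying `λ_min(Z) < 1`, action matrix `A := (α Z - ℓ Iₙ)⁻²`
normalized so that `tr(A) = 1` (where `ℓ < α λ_min(Z)`), `A^{1/2} = (α Z - ℓ Iₙ)⁻¹`,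
and `S' := {i ∈ S : 2α ⟨vᵢvᵢᵀ, A^{1/2}⟩ < 1/2}`, setting
`E⁺ := (1/k) ∑_{j ∉ S} cⱼ xⱼ (1 + 2α ⟨vⱼvⱼᵀ, A^{1/2}⟩)` and
`E⁻ := (1/k) ∑_{i ∈ S'} cᵢ (1 - xᵢ)(1 - 2α ⟨vᵢvᵢᵀ, A^{1/2}⟩)`, one has
`(1/k)(⟨c,x⟩ - c(S)) ≤ E⁺ - E⁻ ≤ (1/k)(⟨c,x⟩ - c(S) + 14 n c_∞ / ε)`. -/
theorem swapping_expected_cost_change {n m : ℕ}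
    (v : Fin m → Fin n → ℝ) (x c : Fin m → ℝ) (ε α k ℓ lam : ℝ)
    (hx : ∀ i, 0 ≤ x i ∧ x i ≤ 1) (hc : ∀ i, 0 ≤ c i)
    (hsum : (∑ i, x i • vecMulVec (v i) (v i)) = (1 : Matrix (Fin n) (Fin n) ℝ))
    (hε0 : 0 < ε) (hε1 : ε < 1/2)
    (hα : α = Real.sqrt n / ε) (hk : k = m + 2 * n / ε)
    (S : Finset (Fin m)) (Z A Asq : Matrix (Fin n) (Fin n) ℝ)
    (hZ : Z = ∑ i ∈ S, vecMulVec (v i) (v i))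
    (hlam : IsGreatest {t : ℝ | (Z - t • 1).PosSemidef} lam)
    (hlam1 : lam < 1)
    (hℓ : ℓ < α * lam)
    (hAsq : Asq = (α • Z - ℓ • 1)⁻¹)
    (hA : A = Asq ^ 2)
    (htr : A.trace = 1)
    (S' : Finset (Fin m))
    (hS' : S' = S.filter fun i => 2 * α * (vecMulVec (v i) (v i) * Asq).trace < 1/2)
    (Ep Em : ℝ)
    (hEp : Ep = (1/k) * ∑ j ∈ Sᶜ,
      c j * x j * (1 + 2 * α * (vecMulVec (v j) (v j) * Asq).trace))
    (hEm : Em = (1/k) * ∑ i ∈ S',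
      c i * (1 - x i) * (1 - 2 * α * (vecMulVec (v i) (v i) * Asq).trace)) :
    (1/k) * ((∑ i, c i * x i) - ∑ i ∈ S, c i) ≤ Ep - Em ∧
    Ep - Em ≤ (1/k) * ((∑ i, c i * x i) - (∑ i ∈ S, c i) + 14 * n * (⨆ i, c i) / ε) := by
  have hn : 0 < n := by
    rcases Nat.eq_zero_or_pos n with h | h
    · subst h
      simp [Matrix.trace] at htr
    · exact h
  have hn' : (0 : ℝ) < n := by exact_mod_cast hn
  have hsn : 0 < Real.sqrt n := Real.sqrt_pos.2 hn'
  have hss : Real.sqrt n * Real.sqrt n = n := Real.mul_self_sqrt hn'.le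
  have hα0 : 0 < α := by rw [hα]; positivity
  have hαn : α * Real.sqrt n = n / ε := by rw [hα, div_mul_eq_mul_div, hss]
  have hk0 : 0 ≤ 1 / k := by rw [hk]; positivity
  have hPD : (α • Z - ℓ • (1 : Matrix (Fin n) (Fin n) ℝ)).PosDef := by
    have h1 : α • Z - ℓ • (1 : Matrix (Fin n) (Fin n) ℝ) =
        (α * lam - ℓ) • (1 : Matrix (Fin n) (Fin n) ℝ) + α • (Z - lam • 1) := by
      rw [smul_sub, smul_smul, sub_smul]; abel
    rw [h1]
    exact (Matrix.PosDef.one.smul (sub_pos.2 hℓ)).add_posSemidef (hlam.1.smul hα0.le)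
  have hAPD : Asq.PosDef := by rw [hAsq]; exact hPD.inv
  have hsymm : Asq.IsSymm := by
    have := hAPD.isHermitian
    rwa [Matrix.IsHermitian, Matrix.conjTranspose_eq_transpose_of_trivial] at this
  have htrA : Asq.trace ≤ Real.sqrt n := trace_le_sqrt Asq hsymm (hA ▸ htr)
  have htrA0 : 0 ≤ Asq.trace := hAPD.posSemidef.trace_nonneg
  have hq : ∀ i, 0 ≤ 2 * α * (vecMulVec (v i) (v i) * Asq).trace := by
    intro i
    have h1 : (vecMulVec (v i) (v i) * Asq).trace = v i ⬝ᵥ (Asq *ᵥ v i) := by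
      rw [Matrix.trace_mul_comm, Matrix.mul_vecMulVec, Matrix.trace_vecMulVec, dotProduct_comm]
    have h2 := hAPD.posSemidef.dotProduct_mulVec_nonneg (v i)
    rw [h1]
    have h3 : 0 ≤ v i ⬝ᵥ (Asq *ᵥ v i) := by simpa using h2
    positivity
  have hxt : ∑ i, x i * (2 * α * (vecMulVec (v i) (v i) * Asq).trace) = 2 * α * Asq.trace := by
    have h1 : Asq.trace = ((∑ i, x i • vecMulVec (v i) (v i)) * Asq).trace := by
      rw [hsum, one_mul]
    rw [h1, Finset.sum_mul, Matrix.trace_sum, Finset.mul_sum]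
    refine Finset.sum_congr rfl fun i _ => ?_
    rw [Matrix.smul_mul, Matrix.trace_smul, smul_eq_mul]; ring
  have hSt : ∑ i ∈ S, 2 * α * (vecMulVec (v i) (v i) * Asq).trace =
      2 * (n + ℓ * Asq.trace) := by
    have h1 : (α • Z - ℓ • (1 : Matrix (Fin n) (Fin n) ℝ)) * Asq = 1 := by
      rw [hAsq]
      exact Matrix.mul_nonsing_inv _ ((Matrix.isUnit_iff_isUnit_det _).1 hPD.isUnit)
    have h2 := congrArg Matrix.trace h1
    rw [sub_mul, Matrix.smul_mul, Matrix.smul_mul, one_mul, Matrix.trace_sub, Matrix.trace_smul,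
      Matrix.trace_smul, Matrix.trace_one, Fintype.card_fin, smul_eq_mul, smul_eq_mul] at h2
    rw [← Finset.mul_sum, ← Matrix.trace_sum, ← Finset.sum_mul, ← hZ]
    linarith
  have hℓα : ℓ ≤ α := by nlinarith
  have hT : ∑ i, x i * (2 * α * (vecMulVec (v i) (v i) * Asq).trace) +
      2 * ∑ i ∈ S, 2 * α * (vecMulVec (v i) (v i) * Asq).trace ≤ 14 * n / ε := by
    rw [hxt, hSt]
    have h1 : α * Asq.trace ≤ n / ε := hαn ▸ mul_le_mul_of_nonneg_left htrA hα0.le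
    have h2 : ℓ * Asq.trace ≤ α * Asq.trace := mul_le_mul_of_nonneg_right hℓα htrA0
    have h3 : (n : ℝ) ≤ n / ε := by
      rw [le_div_iff₀ hε0]; nlinarith
    have h4 : 14 * (n : ℝ) / ε = 14 * (n / ε) := by ring
    rw [h4]
    linarith
  have hC : ∀ i, c i ≤ ⨆ i, c i := fun i => le_ciSup (Set.finite_range c).bddAbove i
  obtain ⟨hlo, hhi⟩ := cost_excess_bounds x c
    (fun i => 2 * α * (vecMulVec (v i) (v i) * Asq).trace) (⨆ i, c i) (14 * n / ε)
    hx hc hC (Real.iSup_nonneg hc) hq S hT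
  rw [hEp, hEm, hS', ← mul_sub]
  refine ⟨mul_le_mul_of_nonneg_left hlo hk0, mul_le_mul_of_nonneg_left (hhi.trans_eq ?_) hk0⟩
  ring
end

section
/- Let Z be an n×n real symmetric matrix, let α > 0, and let ℓ ∈ ℝ be such that ℓ·I_n + α·Z is positive definite and the matrix A := (ℓ·I_n + α·Z)^{−2} satisfies tr(A) = 1. Then tr(A·Z) ≤ λ_min(Z) + √n/α. -/
/-!
Write `M = ℓ I + α Z`, `B = M⁻¹`, so that `A = B²`. From `α Z = M - ℓ I` one gets
`α tr(A Z) = tr B - ℓ tr A = tr B - ℓ`. Cauchy–Schwarz bounds `tr B` by `√n · √(tr B²) = √n`, and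
positivity of `M` says `Z ⪰ -(ℓ/α) I`, that is, `-ℓ/α ≤ λ_min(Z)`. The claim is the sum of these
two bounds.
-/

open Matrix

/-- Cauchy–Schwarz for the Frobenius inner product of a symmetric matrix with the identity. -/
lemma sq_trace_le_card_mul_trace_sq {n : ℕ} (B : Matrix (Fin n) (Fin n) ℝ) (hB : B.IsSymm) :
    B.trace ^ 2 ≤ n * (B ^ 2).trace := by
  have h1 : (∑ i, B i i) ^ 2 ≤ n * ∑ i, B i i ^ 2 := by
    simpa using sq_sum_le_card_mul_sum_sq (s := Finset.univ) (f := fun i => B i i)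
  have h2 : ∑ i, B i i ^ 2 ≤ (B ^ 2).trace := by
    rw [pow_two, Matrix.trace]
    refine Finset.sum_le_sum fun i _ => ?_
    have hsum : (B * B).diag i = ∑ j, B i j ^ 2 := by
      simp only [Matrix.diag_apply, Matrix.mul_apply]
      exact Finset.sum_congr rfl fun j _ => by rw [hB.apply i j, pow_two]
    rw [hsum]
    exact Finset.single_le_sum (f := fun j => B i j ^ 2) (fun j _ => sq_nonneg _)
      (Finset.mem_univ i)
  exact h1.trans (mul_le_mul_of_nonneg_left h2 (Nat.cast_nonneg n))

/-- **Trace bound for the action matrix against a symmetric matrix.**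
Let `Z` be an `n × n` real symmetric matrix, `α > 0`, and `ℓ ∈ ℝ` such that
`ℓ Iₙ + α Z` is positive definite and `A := (ℓ Iₙ + α Z)⁻²` satisfies `tr(A) = 1`.
Then `tr(A Z) ≤ λ_min(Z) + √n / α`, where `λ_min(Z)` is the minimum eigenvalue of `Z`,
characterized as the greatest `t` with `Z - t Iₙ ⪰ 0`. -/
theorem trace_action_matrix_bound {n : ℕ} (Z : Matrix (Fin n) (Fin n) ℝ)
    (hZ : Z.IsSymm) (α : ℝ) (hα : 0 < α) (ℓ lam : ℝ)
    (hpd : (ℓ • (1 : Matrix (Fin n) (Fin n) ℝ) + α • Z).PosDef)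
    (A : Matrix (Fin n) (Fin n) ℝ)
    (hA : A = ((ℓ • (1 : Matrix (Fin n) (Fin n) ℝ) + α • Z)⁻¹) ^ 2)
    (htr : A.trace = 1)
    (hlam : IsGreatest {t : ℝ | (Z - t • 1).PosSemidef} lam) :
    (A * Z).trace ≤ lam + Real.sqrt n / α := by
  set M := ℓ • (1 : Matrix (Fin n) (Fin n) ℝ) + α • Z with hM
  have hdet : IsUnit M.det := (Matrix.isUnit_iff_isUnit_det M).mp hpd.isUnit
  have hMs : M.IsSymm := by
    rw [hM, Matrix.IsSymm, Matrix.transpose_add, Matrix.transpose_smul, Matrix.transpose_smul,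
      Matrix.transpose_one, hZ.eq]
  have hBs : (M⁻¹).IsSymm := by
    rw [Matrix.IsSymm, Matrix.transpose_nonsing_inv, hMs.eq]
  have htrB : (M⁻¹).trace ≤ Real.sqrt n := by
    apply Real.le_sqrt_of_sq_le
    simpa [← hA, htr] using sq_trace_le_card_mul_trace_sq M⁻¹ hBs
  have hAM : A * M = M⁻¹ := by
    rw [hA, pow_two, Matrix.mul_assoc, Matrix.nonsing_inv_mul M hdet, Matrix.mul_one]
  have htrAZ : ℓ + α * (A * Z).trace = (M⁻¹).trace := by
    rw [← hAM, hM]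
    simp [Matrix.mul_add, htr]
  have hlow : -ℓ / α ≤ lam := by
    apply hlam.2
    have hscale : Z - (-ℓ / α) • (1 : Matrix (Fin n) (Fin n) ℝ) = α⁻¹ • M := by
      rw [hM, smul_add, smul_smul, smul_smul, inv_mul_cancel₀ hα.ne', one_smul, neg_div, neg_smul,
        sub_neg_eq_add, add_comm, div_eq_inv_mul]
    rw [Set.mem_setOf_eq, hscale]
    exact hpd.posSemidef.smul (inv_nonneg.mpr hα.le)
  calc (A * Z).trace = -ℓ / α + (M⁻¹).trace / α := by
        rw [← htrAZ]
        field_simp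
        ring
    _ ≤ lam + Real.sqrt n / α := by gcongr
end

section
/- Let Z be an n×n real positive semidefinite matrix, let α > 0, and let ℓ ∈ ℝ be such that ℓ·I_n + α·Z is positive definite and A := (α·Z + ℓ·I_n)^{−2} satisfies tr(A) = 1. Then tr(Z·A) ≤ √n/α + λ_min(Z), and α·tr(Z·A^{1/2}) ≤ n + α·√n·λ_min(Z), where A^{1/2} = (α·Z + ℓ·I_n)^{−1}. -/
open Matrix

/-!
Put `M = α Z + ℓ I` and `B = M⁻¹`, so that `A = B²`. Multiplying `α Z = M - ℓ I` by `B²` and by `B`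
and taking traces gives the identities `α tr(Z A) = tr B - ℓ` and `α tr(Z B) = n - ℓ tr B`.
Cauchy–Schwarz gives `0 ≤ tr B ≤ √n` (`trace_le_sqrt_of_trace_sq_eq_one`), while positivity of `M`
says `Z - (-ℓ / α) I ⪰ 0`, hence `-ℓ ≤ α λ_min(Z)`; also `λ_min(Z) ≥ 0` since `Z ⪰ 0`.
-/

/-- Cauchy–Schwarz for the Frobenius inner product of `B` with the identity: `tr B ≤ √n ‖B‖_F`,
where `‖B‖_F² = tr (B²) = 1` by symmetry of `B`. -/
lemma trace_le_sqrt_of_trace_sq_eq_one {n : ℕ} (B : Matrix (Fin n) (Fin n) ℝ)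
    (hB : B.IsHermitian) (h : (B ^ 2).trace = 1) : B.trace ≤ Real.sqrt n := by
  apply Real.le_sqrt_of_sq_le
  have h1 : B.trace ^ 2 ≤ n * ∑ i, B i i ^ 2 := by
    simpa [Matrix.trace] using
      sq_sum_le_card_mul_sum_sq (s := (Finset.univ : Finset (Fin n))) (f := fun i => B i i)
  have h2 : ∑ i, B i i ^ 2 ≤ (B ^ 2).trace := by
    simp only [Matrix.trace, Matrix.diag, pow_two, Matrix.mul_apply]
    refine Finset.sum_le_sum fun i _ => ?_
    have hs : ∀ j, B i j * B j i = B i j * B i j := fun j => by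
      have := hB.apply i j
      simp only [star_trivial] at this
      rw [this]
    simp only [hs]
    exact Finset.single_le_sum (f := fun j => B i j * B i j)
      (fun j _ => mul_self_nonneg _) (Finset.mem_univ i)
  rw [h] at h2
  calc B.trace ^ 2 ≤ n * ∑ i, B i i ^ 2 := h1
    _ ≤ n * 1 := by gcongr
    _ = n := mul_one _

/-- **Trace bounds for the action matrix (Claim 2.11 of Allen-Zhu–Li–Singh–Wang).**
Let `Z ⪰ 0` be an `n × n` real positive semidefinite matrix, `α > 0`, and `ℓ ∈ ℝ`
such that `ℓ Iₙ + α Z` is positive definite and `A := (α Z + ℓ Iₙ)⁻²` satisfies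
`tr(A) = 1`. Then `tr(Z A) ≤ √n / α + λ_min(Z)` and
`α tr(Z A^{1/2}) ≤ n + α √n λ_min(Z)`, where `A^{1/2} = (α Z + ℓ Iₙ)⁻¹` and `λ_min(Z)`
is the minimum eigenvalue of `Z`, characterized as the greatest `t` with `Z - t Iₙ ⪰ 0`. -/
theorem trace_action_matrix_psd_bounds {n : ℕ} (Z : Matrix (Fin n) (Fin n) ℝ)
    (hZ : Z.PosSemidef) (α : ℝ) (hα : 0 < α) (ℓ lam : ℝ)
    (hpd : (ℓ • (1 : Matrix (Fin n) (Fin n) ℝ) + α • Z).PosDef)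
    (A Asq : Matrix (Fin n) (Fin n) ℝ)
    (hAsq : Asq = (α • Z + ℓ • (1 : Matrix (Fin n) (Fin n) ℝ))⁻¹)
    (hA : A = Asq ^ 2)
    (htr : A.trace = 1)
    (hlam : IsGreatest {t : ℝ | (Z - t • 1).PosSemidef} lam) :
    (Z * A).trace ≤ Real.sqrt n / α + lam ∧
    α * (Z * Asq).trace ≤ n + α * Real.sqrt n * lam := by
  rw [add_comm] at hpd
  have hunit : IsUnit (α • Z + ℓ • (1 : Matrix (Fin n) (Fin n) ℝ)).det :=
    (Matrix.isUnit_iff_isUnit_det _).1 hpd.isUnit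
  have hBpd : Asq.PosDef := hAsq ▸ hpd.inv
  have hMB : (α • Z + ℓ • (1 : Matrix (Fin n) (Fin n) ℝ)) * Asq = 1 := by
    rw [hAsq, Matrix.mul_nonsing_inv _ hunit]
  have htrB : Asq.trace ≤ Real.sqrt n :=
    trace_le_sqrt_of_trace_sq_eq_one Asq hBpd.isHermitian (hA ▸ htr)
  have htrB0 : 0 ≤ Asq.trace := hBpd.posSemidef.trace_nonneg
  have hlam0 : 0 ≤ lam := hlam.2 (by simpa using hZ)
  have hℓ : -ℓ ≤ α * lam := by
    have hmem : -ℓ / α ≤ lam := hlam.2 (by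
      have h := hpd.posSemidef.smul (inv_nonneg.2 hα.le)
      have he : α⁻¹ • (α • Z + ℓ • (1 : Matrix (Fin n) (Fin n) ℝ)) = Z - (-ℓ / α) • 1 := by
        rw [smul_add, smul_smul, smul_smul, inv_mul_cancel₀ hα.ne', one_smul, neg_div, neg_smul,
          sub_neg_eq_add, div_eq_inv_mul]
      rwa [he] at h)
    rw [div_le_iff₀ hα] at hmem
    linarith
  have e2 : α * (Z * Asq).trace = n - ℓ * Asq.trace := by
    have := congrArg Matrix.trace hMB
    simp [add_mul, Matrix.trace_add, Matrix.trace_smul] at this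
    linarith
  have e1 : α * (Z * A).trace = Asq.trace - ℓ := by
    have h : (α • Z + ℓ • (1 : Matrix (Fin n) (Fin n) ℝ)) * A = Asq := by
      rw [hA, pow_two, ← mul_assoc, hMB, one_mul]
    have := congrArg Matrix.trace h
    simp [add_mul, Matrix.trace_add, Matrix.trace_smul, htr] at this
    linarith
  constructor
  · have : α * (Z * A).trace ≤ α * (Real.sqrt n / α + lam) := by
      rw [e1, mul_add, mul_div_cancel₀ _ hα.ne']
      linarith
    exact le_of_mul_le_mul_left this hα
  · rw [e2]
    have h1 := mul_le_mul_of_nonneg_right hℓ htrB0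
    have h2 := mul_le_mul_of_nonneg_left htrB (mul_nonneg hα.le hlam0)
    nlinarith
end

section
/- Fix n ≥ 1, ε ∈ (0, 1), and c_∞ > 0. For i ∈ {1, …, n}, define vectors v_{i,1} := √(1 − ε)·e_i and v_{i,2} := e_i in ℝ^n, costs c_{i,1} := 0 and c_{i,2} := c_∞, and fractional values x_{i,1} := 1 and x_{i,2} := ε, where e_i is the i-th standard basis vector. Then Σ_{i=1}^n Σ_{j ∈ {1,2}} x_{i,j}·v_{i,j} v_{i,j}ᵀ = I_n and ⟨c, x⟩ = ε·n·c_∞, and every z ∈ {0,1}^{2n} (indexed by the pairs (i, j)) satisfying Σ_{i,j} z_{i,j}·v_{i,j} v_{i,j}ᵀ ⪰ I_n must have z_{i,2} = 1 for all i, hence ⟨c, z⟩ ≥ n·c_∞. In particular, for every α ≥ 1 with α·ε ≤ 1/2, one has ⟨c, z⟩ − α·⟨c, x⟩ ≥ n·c_∞/2, showing that the additive error term Ω(n·c_∞) in one-sided spectral rounding is necessary. -/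
/-!
Every `v_{i,j}` is a multiple of `eᵢ`, so a weighted sum `∑ y_{i,j} v_{i,j} v_{i,j}ᵀ` is diagonal,
with `i`-th entry `y_{i,1} (1 - ε) + y_{i,2}` (`sum_smul_vecMulVec_eq_diagonal`). For `y = x` every
entry is `1`. For `y = z` with 0/1 values, `⪰ Iₙ` forces every entry to be at least `1`; since
`1 - ε < 1`, this is impossible when `z_{i,2} = 0`. The cost bounds follow, as only the points
`(i, 2)` have nonzero cost.
-/

open Matrix BigOperators

lemma sum_smul_vecMulVec_eq_diagonal {n : ℕ} {ε : ℝ} (hε1 : ε < 1) (y : Fin n × Fin 2 → ℝ) :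
    (∑ p : Fin n × Fin 2, y p • vecMulVec
      (fun w : Fin n => (if p.2 = 0 then Real.sqrt (1 - ε) else 1) * (if w = p.1 then 1 else 0))
      (fun w : Fin n => (if p.2 = 0 then Real.sqrt (1 - ε) else 1) * (if w = p.1 then 1 else 0)))
      = Matrix.diagonal (fun i => y (i, 0) * (1 - ε) + y (i, 1)) := by
  have hs : Real.sqrt (1 - ε) * Real.sqrt (1 - ε) = 1 - ε :=
    Real.mul_self_sqrt (by linarith)
  ext a b
  rw [Matrix.sum_apply, Fintype.sum_prod_type]
  by_cases hab : a = b
  · subst hab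
    simp [vecMulVec_apply, Fin.sum_univ_two, hs]
  · rw [Matrix.diagonal_apply_ne _ hab]
    refine Finset.sum_eq_zero fun i _ => Finset.sum_eq_zero fun j _ => ?_
    by_cases ha : a = i
    · have hb : b ≠ i := fun h => hab (ha.trans h.symm)
      simp [vecMulVec_apply, hb]
    · simp [vecMulVec_apply, ha]

/-- **Tight example: the additive error `Ω(n c_∞)` is necessary for one-sided spectral
rounding (Example 3.14).** With design points indexed by pairs `(i, j) ∈ [n] × {1, 2}`
(here `j : Fin 2`, with `j = 0` playing the role of `1` and `j = 1` the role of `2`):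
`v_{i,1} := √(1-ε) eᵢ`, `v_{i,2} := eᵢ`, `c_{i,1} := 0`, `c_{i,2} := c_∞`, `x_{i,1} := 1`,
`x_{i,2} := ε`. Then `∑ x_{i,j} v_{i,j} v_{i,j}ᵀ = Iₙ`, `⟨c, x⟩ = ε n c_∞`, and every
`z ∈ {0,1}^{2n}` with `∑ z_{i,j} v_{i,j} v_{i,j}ᵀ ⪰ Iₙ` has `z_{i,2} = 1` for all `i`,
hence `⟨c, z⟩ ≥ n c_∞`; in particular, for all `α ≥ 1` with `α ε ≤ 1/2`,
`⟨c, z⟩ - α ⟨c, x⟩ ≥ n c_∞ / 2`. -/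
theorem one_sided_rounding_additive_error_necessary {n : ℕ} (hn : 1 ≤ n)
    (ε cinf : ℝ) (hε0 : 0 < ε) (hε1 : ε < 1) (hcinf : 0 < cinf)
    (v : Fin n × Fin 2 → Fin n → ℝ)
    (hv : v = fun p w => (if p.2 = 0 then Real.sqrt (1 - ε) else 1) *
      (if w = p.1 then 1 else 0))
    (c x : Fin n × Fin 2 → ℝ)
    (hcdef : c = fun p => if p.2 = 0 then 0 else cinf)
    (hxdef : x = fun p => if p.2 = 0 then 1 else ε) :
    (∑ p, x p • vecMulVec (v p) (v p)) = (1 : Matrix (Fin n) (Fin n) ℝ) ∧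
    (∑ p, c p * x p) = ε * n * cinf ∧
    ∀ z : Fin n × Fin 2 → ℝ, (∀ p, z p = 0 ∨ z p = 1) →
      ((∑ p, z p • vecMulVec (v p) (v p)) - (1 : Matrix (Fin n) (Fin n) ℝ)).PosSemidef →
      (∀ i : Fin n, z (i, 1) = 1) ∧
      (n : ℝ) * cinf ≤ (∑ p, c p * z p) ∧
      ∀ α : ℝ, 1 ≤ α → α * ε ≤ 1/2 →
        (n : ℝ) * cinf / 2 ≤ (∑ p, c p * z p) - α * (∑ p, c p * x p) := by
  subst hv hcdef hxdef
  have hcost : ∀ y : Fin n × Fin 2 → ℝ,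
      (∑ p : Fin n × Fin 2, (if p.2 = 0 then 0 else cinf) * y p) = ∑ i, cinf * y (i, 1) := by
    intro y
    simp [Fintype.sum_prod_type, Fin.sum_univ_two]
  have hcx : (∑ p : Fin n × Fin 2,
      (if p.2 = 0 then 0 else cinf) * (if p.2 = 0 then (1 : ℝ) else ε)) = ε * n * cinf := by
    rw [hcost (fun p => if p.2 = 0 then (1 : ℝ) else ε)]
    simp
    ring
  refine ⟨?_, hcx, ?_⟩
  · refine (sum_smul_vecMulVec_eq_diagonal hε1 (fun p => if p.2 = 0 then (1 : ℝ) else ε)).trans ?_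
    simp
  · intro z hz hpsd
    have hz1 : ∀ i : Fin n, z (i, 1) = 1 := by
      intro i
      have hd := hpsd.diag_nonneg (i := i)
      rw [sum_smul_vecMulVec_eq_diagonal hε1 z] at hd
      simp only [Matrix.sub_apply, Matrix.diagonal_apply_eq, Matrix.one_apply_eq] at hd
      refine (hz (i, 1)).resolve_left fun h1 => ?_
      rcases hz (i, 0) with h0 | h0 <;> rw [h0, h1] at hd <;> linarith
    have hcz : (∑ p : Fin n × Fin 2, (if p.2 = 0 then 0 else cinf) * z p) = n * cinf := by
      rw [hcost z]
      simp [hz1]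
    refine ⟨hz1, hcz.ge, fun α _ hα => ?_⟩
    have hnc : 0 ≤ (n : ℝ) * cinf := by positivity
    simp only [hcz, hcx]
    nlinarith [mul_le_mul_of_nonneg_right hα hnc]
end
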